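/- Suppose d, n ∈ ℕ are such that 3 ≤ d ≤ n/4 and S ⊆ V satisfies |S| ≤ n/6. Let F be a bipartite graph with vertex partition (S, V∖S), let v ∈ V∖S, let k ≥ 0 be an integer, and let G be a simple d-regular graph on V with F ⊆ G and d_{G,S}(v) − d_F(v) = k+1. Then the number of triples (u, x, y), where u ∈ S with uv ∈ E(G)∖E(F), and (x, y) is an ordered pair of distinct vertices in V∖S with x, y ≠ v, xy ∈ E(G), vx ∉ E(G) and uy ∉ E(G), is at least (k+1)·dn/6. -/

import Mathlib

open scoped Classical BigOperators

noncomputable section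

/-!
Fix an edge `uv` of `G` with `u ∈ S`. An ordered pair `(x, y)` with `xy ∈ E(G)` completes it to a
triple as soon as `x` avoids `S ∪ N(v) ∪ {v}` and `y` avoids `S ∪ N(u)`. Both forbidden sets have
at most `|S| + d` elements (for the first one because `u` lies in `S` and in `N(v)`, which pays for
`v`), so of the `nd` ordered pairs of adjacent vertices at most `2(|S| + d)d ≤ 5nd/6` are lost.
There are at least `k + 1` choices of `u`.
-/

section InteredgeCounting

open Finset

variable {V : Type*} [Fintype V] (G : SimpleGraph V) [DecidableRel G.Adj]

lemma card_interedges_univ_right (A : Finset V) :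
    #(G.interedges A univ) = ∑ a ∈ A, G.degree a := by
  have mem_iff (p : V × V) :
      p ∈ G.interedges A univ ↔ p.1 ∈ A ∧ p.2 ∈ G.neighborFinset p.1 := by
    simp [G.mem_interedges_iff]
  rw [card_eq_sum_ones, sum_finset_product _ A (fun a => G.neighborFinset a) mem_iff]
  simp only [← card_eq_sum_ones, SimpleGraph.card_neighborFinset_eq_degree]

lemma card_interedges_univ_left (B : Finset V) :
    #(G.interedges univ B) = ∑ b ∈ B, G.degree b := by
  rw [← card_interedges_univ_right]
  have : Std.Symm G.Adj := G.symm
  exact Rel.card_interedges_comm univ B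

variable [DecidableEq V]

lemma sum_degree_le_card_interedges_compl_add (A B : Finset V) :
    ∑ w, G.degree w ≤
      #(G.interedges Aᶜ Bᶜ) + ∑ a ∈ A, G.degree a + ∑ b ∈ B, G.degree b := by
  have cover : G.interedges univ univ ⊆
      G.interedges Aᶜ Bᶜ ∪ G.interedges A univ ∪ G.interedges univ B := by
    intro p
    simp only [mem_union, G.mem_interedges_iff, mem_compl, mem_univ]
    tauto
  rw [← card_interedges_univ_right, ← card_interedges_univ_right, ← card_interedges_univ_left]
  exact (card_le_card cover).trans <|
    (card_union_le _ _).trans (Nat.add_le_add_right (card_union_le _ _) _)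

variable {G}

lemma card_mul_le_card_interedges_compl_add {d : ℕ} (hG : G.IsRegularOfDegree d)
    (A B : Finset V) :
    Fintype.card V * d ≤ #(G.interedges Aᶜ Bᶜ) + #A * d + #B * d := by
  simpa [hG.degree_eq] using sum_degree_le_card_interedges_compl_add G A B

end InteredgeCounting

section Switchings

open Finset

variable {V : Type*} [Fintype V] [DecidableEq V]

/-- The triples `(u, x, y)` counted by the theorem: replacing the edges `uv` and `xy` of `G` by `vx`
and `uy` keeps all degrees and lowers `d_{G,S}(v)` by one. -/
def switchings (G F : SimpleGraph V) (S : Finset V) (v : V) : Finset (V × V × V) :=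
  univ.filter fun q =>
    q.1 ∈ S ∧ G.Adj q.1 v ∧ ¬ F.Adj q.1 v ∧
    q.2.1 ≠ q.2.2 ∧ q.2.1 ∉ S ∧ q.2.2 ∉ S ∧ q.2.1 ≠ v ∧ q.2.2 ≠ v ∧
    G.Adj q.2.1 q.2.2 ∧ ¬ G.Adj v q.2.1 ∧ ¬ G.Adj q.1 q.2.2

/-- The vertices `u ∈ S` with `uv ∈ E(G) ∖ E(F)`, i.e. the first entries of the switchings
at `v`. -/
def freeNeighbors (G F : SimpleGraph V) (S : Finset V) (v : V) : Finset V :=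
  (G.neighborFinset v ∩ S) \ F.neighborFinset v

/-- The pairs `(x, y)` completing an edge `uv` with `u ∈ S` to a switching. The condition `y ≠ v`
is omitted since it follows from `y ∉ N(u)`. -/
def switchingPairs (G : SimpleGraph V) (S : Finset V) (v u : V) : Finset (V × V) :=
  G.interedges (insert v (S ∪ G.neighborFinset v))ᶜ (S ∪ G.neighborFinset u)ᶜ

variable {G : SimpleGraph V} (F : SimpleGraph V) {S : Finset V} {v u : V} {d k : ℕ}

lemma mem_switchings_iff (q : V × V × V) :
    q ∈ switchings G F S v ↔
      q.1 ∈ freeNeighbors G F S v ∧ q.2 ∈ switchingPairs G S v q.1 := by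
  obtain ⟨u, x, y⟩ := q
  have ne_of_adj : G.Adj x y → x ≠ y := SimpleGraph.Adj.ne
  have ne_of_not_adj : G.Adj u v → ¬ G.Adj u y → y ≠ v := by
    rintro huv huy rfl
    exact huy huv
  simp only [switchings, freeNeighbors, switchingPairs, mem_filter, mem_univ, true_and, mem_sdiff,
    mem_inter, SimpleGraph.mem_neighborFinset, G.mem_interedges_iff, mem_compl, mem_insert,
    mem_union, G.adj_comm v u, F.adj_comm v u]
  tauto

lemma card_switchings :
    #(switchings G F S v) = ∑ u ∈ freeNeighbors G F S v, #(switchingPairs G S v u) := by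
  simp only [card_eq_sum_ones, sum_finset_product _ _ _ (mem_switchings_iff F)]

lemma le_card_freeNeighbors (hk : F.degree v + k ≤ #(G.neighborFinset v ∩ S)) :
    k ≤ #(freeNeighbors G F S v) := by
  have sdiff_bound := le_card_sdiff (F.neighborFinset v) (G.neighborFinset v ∩ S)
  rw [SimpleGraph.card_neighborFinset_eq_degree] at sdiff_bound
  exact (Nat.le_sub_of_add_le' hk).trans sdiff_bound

lemma card_insert_union_neighborFinset_le (huS : u ∈ S) (huv : G.Adj v u) :
    #(insert v (S ∪ G.neighborFinset v)) ≤ #S + G.degree v := by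
  have inter_pos : 0 < #(S ∩ G.neighborFinset v) :=
    card_pos.mpr ⟨u, by simp [huS, huv]⟩
  have insert_le := card_insert_le v (S ∪ G.neighborFinset v)
  have union_add_inter := card_union_add_card_inter S (G.neighborFinset v)
  rw [SimpleGraph.card_neighborFinset_eq_degree] at union_add_inter
  lia

lemma card_mul_le_card_switchingPairs_add (hG : G.IsRegularOfDegree d)
    (huS : u ∈ S) (huv : G.Adj v u) :
    Fintype.card V * d ≤ #(switchingPairs G S v u) + 2 * (#S + d) * d := by
  have card_avoid_x : #(insert v (S ∪ G.neighborFinset v)) ≤ #S + d := by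
    simpa only [hG.degree_eq] using card_insert_union_neighborFinset_le huS huv
  have card_avoid_y : #(S ∪ G.neighborFinset u) ≤ #S + d := by
    simpa only [SimpleGraph.card_neighborFinset_eq_degree, hG.degree_eq] using
      card_union_le S (G.neighborFinset u)
  calc Fintype.card V * d
      ≤ #(switchingPairs G S v u) + #(insert v (S ∪ G.neighborFinset v)) * d
          + #(S ∪ G.neighborFinset u) * d := card_mul_le_card_interedges_compl_add hG _ _
    _ ≤ #(switchingPairs G S v u) + (#S + d) * d + (#S + d) * d := by gcongr
    _ = #(switchingPairs G S v u) + 2 * (#S + d) * d := by ring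

lemma card_mul_le_six_mul_card_switchingPairs (hG : G.IsRegularOfDegree d)
    (hd : 4 * d ≤ Fintype.card V) (hS : 6 * #S ≤ Fintype.card V)
    (huS : u ∈ S) (huv : G.Adj v u) :
    Fintype.card V * d ≤ 6 * #(switchingPairs G S v u) := by
  have lost_le : 12 * (#S + d) * d ≤ 5 * Fintype.card V * d :=
    Nat.mul_le_mul_right d (by lia)
  have pairs_bound := card_mul_le_card_switchingPairs_add hG huS huv
  linarith

lemma card_freeNeighbors_mul_le_six_mul_card_switchings (hG : G.IsRegularOfDegree d)
    (hd : 4 * d ≤ Fintype.card V) (hS : 6 * #S ≤ Fintype.card V) :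
    #(freeNeighbors G F S v) * (Fintype.card V * d) ≤ 6 * #(switchings G F S v) := by
  rw [card_switchings, mul_sum, ← smul_eq_mul]
  refine card_nsmul_le_sum _ _ _ fun u hu => ?_
  simp only [freeNeighbors, mem_sdiff, mem_inter, SimpleGraph.mem_neighborFinset] at hu
  exact card_mul_le_six_mul_card_switchingPairs hG hd hS hu.1.2 hu.1.1

theorem statement_9_general (hG : G.IsRegularOfDegree d)
    (hd : 4 * d ≤ Fintype.card V) (hS : 6 * #S ≤ Fintype.card V)
    (hk : F.degree v + (k + 1) ≤ #(G.neighborFinset v ∩ S)) :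
    ((k : ℝ) + 1) * d * Fintype.card V / 6 ≤ #(switchings G F S v) := by
  have count : (k + 1) * (Fintype.card V * d) ≤ 6 * #(switchings G F S v) :=
    (Nat.mul_le_mul_right _ (le_card_freeNeighbors F hk)).trans
      (card_freeNeighbors_mul_le_six_mul_card_switchings F hG hd hS)
  have count_real : ((k : ℝ) + 1) * (Fintype.card V * d) ≤ 6 * #(switchings G F S v) := by
    exact_mod_cast count
  linarith

end Switchings

/-- **Counting step of Lemma 3.2.** Let `G` be a simple `d`-regular graph on `n` vertices
with `3 ≤ d ≤ n/4`, `|S| ≤ n/6`, let `F` be a bipartite graph with parts `(S, V∖S)`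
with `F ⊆ G`, let `v ∉ S` and suppose `d_{G,S}(v) - d_F(v) = k + 1`. Then the number of
triples `(u, x, y)` with `u ∈ S`, `uv ∈ E(G)∖E(F)`, `x, y ∉ S` distinct, `x, y ≠ v`,
`xy ∈ E(G)`, `vx ∉ E(G)` and `uy ∉ E(G)` is at least `(k+1) d n / 6`. -/
theorem statement_9 (n d : ℕ) (hd : 3 ≤ d) (hdn : 4 * d ≤ n)
    (S : Finset (Fin n)) (hS : 6 * S.card ≤ n)
    (F : SimpleGraph (Fin n))
    (hF : ∀ a b : Fin n, F.Adj a b → (a ∈ S ∧ b ∉ S) ∨ (a ∉ S ∧ b ∈ S))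
    (v : Fin n) (hv : v ∉ S) (k : ℕ)
    (G : SimpleGraph (Fin n)) (hreg : ∀ w, G.degree w = d) (hFG : F ≤ G)
    (hk : (G.neighborFinset v ∩ S).card = F.degree v + (k + 1)) :
    ((k : ℝ) + 1) * d * n / 6
      ≤ ((Finset.univ.filter (fun q : Fin n × Fin n × Fin n =>
          q.1 ∈ S ∧ G.Adj q.1 v ∧ ¬ F.Adj q.1 v ∧
          q.2.1 ≠ q.2.2 ∧ q.2.1 ∉ S ∧ q.2.2 ∉ S ∧ q.2.1 ≠ v ∧ q.2.2 ≠ v ∧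
          G.Adj q.2.1 q.2.2 ∧ ¬ G.Adj v q.2.1 ∧ ¬ G.Adj q.1 q.2.2)).card : ℝ) := by
  simpa only [Fintype.card_fin, switchings] using
    statement_9_general F hreg (by simpa) (by simpa) hk.ge
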